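/- Let a, b be finite tuples from L, let p be a Kolchin polynomial of the concatenated tuple (a,b) over K, let q be a Kolchin polynomial of a over K, and let r be a Kolchin polynomial of b over the differential subfield K⟨a⟩. Then deg p = max(deg q, deg r); i.e., τ((a,b)/K) = max{τ(a/K), τ(b/K⟨a⟩)}. -/

import Mathlib

open Polynomial

/-- Iterated application of the derivations `δ` according to the multi-exponent `e`:
`x ↦ δ₁^[e 1] (δ₂^[e 2] (⋯ (δ_m^[e m] x)))`. -/
def thetaApply {L : Type*} {m : ℕ} (δ : Fin m → L → L) (e : Fin m → ℕ) : L → L :=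
  (List.ofFn (fun i => (δ i)^[e i])).foldr (· ∘ ·) id

/-- A subfield of `L` is a differential subfield if it is closed under each derivation. -/
def IsDiffSubfield {L : Type*} [Field L] {m : ℕ} (δ : Fin m → L → L) (K : Subfield L) : Prop :=
  ∀ i : Fin m, ∀ x ∈ K, δ i x ∈ K

/-- The transcendence degree (as a natural number) of an intermediate field over the base. -/
noncomputable def trdegNat {L : Type*} [Field L] (K : Subfield L) (E : IntermediateField K L) : ℕ :=
  (⨆ s : {s : Set E // AlgebraicIndependent K ((↑) : s → E)}, Cardinal.mk s.1).toNat

/-- `T_{η/K}(s)`: the transcendence degree over `K` of the subfield of `L` generated by `K`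
together with all `δ₁^(e 1) ⋯ δ_m^(e m) (η j)` with `e 1 + ⋯ + e m ≤ s`. -/
noncomputable def diffTrdeg {L : Type*} [Field L] {m n : ℕ} (δ : Fin m → L → L) (K : Subfield L)
    (η : Fin n → L) (s : ℕ) : ℕ :=
  trdegNat K (IntermediateField.adjoin K
    {x : L | ∃ e : Fin m → ℕ, (∑ i, e i) ≤ s ∧ ∃ j : Fin n, x = thetaApply δ e (η j)})

/-- `p` is a Kolchin polynomial of `η` over `K` if `p(s) = T_{η/K}(s)` for all large `s`. -/
def IsKolchinPoly {L : Type*} [Field L] {m n : ℕ} (δ : Fin m → L → L) (K : Subfield L)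
    (η : Fin n → L) (p : ℚ[X]) : Prop :=
  ∃ s₀ : ℕ, ∀ s : ℕ, s₀ ≤ s → p.eval (s : ℚ) = (diffTrdeg δ K η s : ℚ)

/-- `K⟨S⟩`: the smallest differential subfield of `L` containing `K` and `S`. -/
def diffAdjoin {L : Type*} [Field L] {m : ℕ} (δ : Fin m → L → L) (K : Subfield L)
    (S : Set L) : Subfield L :=
  sInf {F : Subfield L | IsDiffSubfield δ F ∧ K ≤ F ∧ S ⊆ F}

open AlgebraicIndependent in
/-- The transcendence degree of `K(G)` over `K` is the rank of the finite set `G` in the matroid of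
algebraic independence over `K`. -/
theorem trdegNat_adjoin_eq_eRk {L : Type*} [Field L] (K : Subfield L) {G : Set L}
    (hG : G.Finite) :
    (trdegNat K (IntermediateField.adjoin K G) : ℕ∞) = (matroid K L).eRk G := by
  set M := matroid K L
  have hGE : G ⊆ IntermediateField.adjoin K G := IntermediateField.subset_adjoin K G
  have hEcl : (IntermediateField.adjoin K G : Set L) ⊆ M.closure G := by
    obtain ⟨S, hS, hSalg⟩ := matroid_isFlat_iff.mp (M.isFlat_closure G)
    intro x hx
    refine hSalg x ?_
    have hle : Algebra.adjoin K G ≤ S := Algebra.adjoin_le fun y hy ↦ by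
      have := M.subset_closure G (Set.subset_univ G)
      rw [← hS] at this
      exact this hy
    refine IsAlgebraic.tower_top_of_subalgebra_le hle ?_
    obtain ⟨r, hr, t, ht, rfl⟩ := IntermediateField.mem_adjoin_iff_div.mp hx
    rw [div_eq_mul_inv]
    exact (isAlgebraic_algebraMap (⟨r, hr⟩ : Algebra.adjoin K G)).mul
      (isAlgebraic_algebraMap (⟨t, ht⟩ : Algebra.adjoin K G)).inv
  obtain ⟨B, hB⟩ := M.exists_isBasis G
  have hBfin : B.Finite := hG.subset hB.subset
  have hBrk : M.eRk G = B.encard := hB.eRk_eq_encard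
  have hmk : ∀ s : {s : Set (IntermediateField.adjoin K G) //
      AlgebraicIndependent K ((↑) : s → IntermediateField.adjoin K G)},
      Cardinal.mk s.1 ≤ Cardinal.mk B := by
    rintro ⟨s, hs⟩
    have hlt : Cardinal.mk B < Cardinal.aleph0 := Cardinal.lt_aleph0_iff_set_finite.mpr hBfin
    rw [← Cardinal.toENat_le_iff_of_lt_aleph0 hlt]
    change s.encard ≤ B.encard
    rw [← hBrk, ← M.eRk_closure_eq, ← Subtype.val_injective.encard_image s]
    refine Matroid.Indep.encard_le_eRk_of_subset ?_ ?_
    · rw [matroid_indep_iff]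
      have := (hs.map' (f := (IntermediateField.adjoin K G).val) Subtype.val_injective)
      exact this.to_subtype_range' (by ext; simp)
    · rintro _ ⟨y, -, rfl⟩
      exact hEcl y.2
  have heq : (⨆ s : {s : Set (IntermediateField.adjoin K G) //
      AlgebraicIndependent K ((↑) : s → IntermediateField.adjoin K G)}, Cardinal.mk s.1) =
      Cardinal.mk B := by
    refine le_antisymm (ciSup_le' hmk) ?_
    have hBE : ∀ b : B, (b : L) ∈ IntermediateField.adjoin K G := fun b ↦ hGE (hB.subset b.2)
    have hind : AlgebraicIndependent K
        (fun b : B ↦ (⟨b, hBE b⟩ : IntermediateField.adjoin K G)) :=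
      AlgebraicIndependent.of_comp (IntermediateField.adjoin K G).val hB.indep
    have hle := le_ciSup (f := fun s : {s : Set (IntermediateField.adjoin K G) //
      AlgebraicIndependent K ((↑) : s → IntermediateField.adjoin K G)} ↦ Cardinal.mk s.1)
      ⟨_, Set.forall_mem_range.mpr hmk⟩ ⟨_, hind.to_subtype_range⟩
    refine le_trans ?_ hle
    rw [Cardinal.mk_range_eq _ hind.injective]
  rw [trdegNat, heq, hBrk]
  exact hBfin.cast_ncard_eq

/-- An intermediate field on which a derivation takes values in a relatively algebraically closed
subalgebra. -/
def derivPreimage {L : Type*} [Field L] {K : Subfield L} (D : Derivation ℤ L L)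
    (hK : ∀ x ∈ K, D x ∈ K) (N : Subalgebra K L) (hN : ∀ x : L, IsAlgebraic N x → x ∈ N) :
    IntermediateField K L where
  carrier := {x | x ∈ N ∧ D x ∈ N}
  mul_mem' := by
    rintro x y ⟨hx, hx'⟩ ⟨hy, hy'⟩
    refine ⟨mul_mem hx hy, ?_⟩
    rw [D.leibniz, smul_eq_mul, smul_eq_mul]
    exact add_mem (mul_mem hx hy') (mul_mem hy hx')
  add_mem' := by
    rintro x y ⟨hx, hx'⟩ ⟨hy, hy'⟩
    exact ⟨add_mem hx hy, by rw [map_add]; exact add_mem hx' hy'⟩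
  algebraMap_mem' := fun k ↦ ⟨N.algebraMap_mem k, N.algebraMap_mem ⟨D k, hK k k.2⟩⟩
  inv_mem' := by
    rintro x ⟨hx, hx'⟩
    have hinv : x⁻¹ ∈ N := hN _ (isAlgebraic_algebraMap (⟨x, hx⟩ : N)).inv
    refine ⟨hinv, ?_⟩
    rw [D.leibniz_inv, smul_eq_mul]
    exact mul_mem (neg_mem (pow_mem hinv 2)) hx'

theorem mem_derivPreimage_of_isAlgebraic {L : Type*} [Field L] [CharZero L] {K : Subfield L}
    (D : Derivation ℤ L L) (hK : ∀ x ∈ K, D x ∈ K) (N : Subalgebra K L)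
    (hN : ∀ x : L, IsAlgebraic N x → x ∈ N) {x : L}
    (hx : IsAlgebraic (derivPreimage D hK N hN) x) : x ∈ derivPreimage D hK N hN := by
  set E := derivPreimage D hK N hN
  have hxN : x ∈ N := hN x (IsAlgebraic.tower_top_of_subalgebra_le
    (A := E.toSubalgebra) (fun y hy ↦ hy.1) hx)
  refine ⟨hxN, ?_⟩
  have haeval : ∀ f : E[X], aeval x f ∈ N := fun f ↦ by
    rw [aeval_eq_sum_range]
    refine sum_mem fun i _ ↦ ?_
    rw [Algebra.smul_def]
    exact mul_mem (f.coeff i).2.1 (pow_mem hxN i)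
  have key : ∀ f : E[X], D (aeval x f) - aeval x (derivative f) * D x ∈ N := by
    intro f
    induction f using Polynomial.induction_on' with
    | add f g hf hg =>
      convert add_mem hf hg using 1
      simp only [map_add]; ring
    | monomial n c =>
      have h : D (aeval x (monomial n c)) - aeval x (derivative (monomial n c)) * D x =
          x ^ n * D (c : L) := by
        rw [derivative_monomial, aeval_monomial, aeval_monomial, D.leibniz, D.leibniz_pow]
        simp only [map_mul, map_natCast, smul_eq_mul, nsmul_eq_mul]
        change (c : L) * _ + _ * D (c : L) - (c : L) * _ * _ * _ = _
        ring
      rw [h]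
      exact mul_mem (pow_mem hxN n) c.2.2
  have hf := key (minpoly E x)
  rw [minpoly.aeval, map_zero, zero_sub] at hf
  have hne := (minpoly.irreducible hx.isIntegral).separable.aeval_derivative_ne_zero
    (minpoly.aeval E x)
  have hinv : (aeval x (derivative (minpoly E x)))⁻¹ ∈ N :=
    hN _ (isAlgebraic_algebraMap (⟨_, haeval _⟩ : N)).inv
  convert neg_mem (mul_mem hinv hf) using 1
  field_simp

open AlgebraicIndependent in
theorem deriv_mem_closure {L : Type*} [Field L] [CharZero L] {K : Subfield L}
    (D : Derivation ℤ L L) (hK : ∀ x ∈ K, D x ∈ K) {S T : Set L}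
    (hS : S ⊆ (matroid K L).closure T) (hDS : ∀ x ∈ S, D x ∈ (matroid K L).closure T) {x : L}
    (hx : x ∈ (matroid K L).closure S) : D x ∈ (matroid K L).closure T := by
  obtain ⟨N, hN, hNalg⟩ := matroid_isFlat_iff.mp ((matroid K L).isFlat_closure T)
  simp only [← hN, SetLike.mem_coe] at hS hDS hNalg ⊢
  refine (mem_derivPreimage_of_isAlgebraic D hK N hNalg ?_).2
  rw [matroid_closure_eq, SetLike.mem_coe, Subalgebra.mem_algebraicClosure] at hx
  exact IsAlgebraic.tower_top_of_subalgebra_le (B := (derivPreimage D hK N hNalg).toSubalgebra)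
    (Algebra.adjoin_le fun y hy ↦ ⟨hS hy, hDS y hy⟩) hx

open AlgebraicIndependent in
/-- Enlarging the base field to a subfield of the closure of `A` enlarges closures at most as
adding `A` does. -/
theorem matroid_closure_subset_closure_union {L : Type*} [Field L] {K F : Subfield L} {A : Set L}
    (hF : (F : Set L) ⊆ (matroid K L).closure A) (Y : Set L) :
    (matroid F L).closure Y ⊆ (matroid K L).closure (A ∪ Y) := by
  obtain ⟨N, hN, hNalg⟩ := matroid_isFlat_iff.mp ((matroid K L).isFlat_closure (A ∪ Y))
  have hFN : (F : Set L) ⊆ N := by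
    rw [hN]
    exact hF.trans ((matroid K L).closure_subset_closure Set.subset_union_left)
  have hYN : Y ⊆ N := by
    rw [hN]
    exact Set.subset_union_right.trans ((matroid K L).subset_closure _)
  let N' : Subalgebra F L := { N with algebraMap_mem' := fun f ↦ hFN f.2 }
  intro x hx
  rw [matroid_closure_eq, SetLike.mem_coe, Subalgebra.mem_algebraicClosure] at hx
  exact hNalg x (IsAlgebraic.tower_top_of_subalgebra_le (B := N')
    (Algebra.adjoin_le fun y hy ↦ hYN hy) hx)

/-- In a well-quasi-order, an increasing sequence of upper sets stabilizes. -/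
theorem exists_forall_of_wellQuasiOrdered {α : Type*} [Preorder α] [WellQuasiOrderedLE α]
    (P : ℕ → α → Prop) (hP : ∀ h h' x y, h ≤ h' → x ≤ y → P h x → P h' y) :
    ∃ h, ∀ x, (∃ h', P h' x) → P h x := by
  by_contra! H
  choose x hx hnx using H
  obtain ⟨g, hg⟩ := (wellQuasiOrdered_le (α := α)).exists_monotone_subseq x
  obtain ⟨k, hk⟩ := hx (g 0)
  exact hnx (g k) (hP k (g k) _ _ g.strictMono.le_apply (hg 0 k k.zero_le) hk)

theorem Polynomial.degree_le_of_eventually_eval_le {p q : ℚ[X]}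
    (h : ∀ᶠ s : ℕ in Filter.atTop, 0 ≤ q.eval (s : ℚ) ∧ q.eval (s : ℚ) ≤ p.eval (s : ℚ)) :
    q.degree ≤ p.degree := by
  by_contra! hlt
  have hq : q ≠ 0 := by rintro rfl; simp at hlt
  have hlim := (div_tendsto_atTop_zero_of_degree_lt p q hlt).comp
    (tendsto_natCast_atTop_atTop (R := ℚ))
  have hroot : ∀ᶠ s : ℕ in Filter.atTop, q.eval (s : ℚ) ≠ 0 :=
    (tendsto_natCast_atTop_atTop (R := ℚ)).eventually (q.eventually_atTop_not_isRoot hq)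
  obtain ⟨s, ⟨h0, hle⟩, hlt1, hne⟩ :=
    (h.and ((hlim.eventually_lt_const one_pos).and hroot)).exists
  have hpos := lt_of_le_of_ne h0 hne.symm
  simp only [Function.comp_apply] at hlt1
  rw [div_lt_one hpos] at hlt1
  exact absurd hle hlt1.not_ge

theorem thetaApply_succ {L : Type*} {m : ℕ} (δ : Fin (m + 1) → L → L) (e : Fin (m + 1) → ℕ)
    (x : L) : thetaApply δ e x =
      (δ 0)^[e 0] (thetaApply (fun i : Fin m ↦ δ i.succ) (fun i ↦ e i.succ) x) := by
  simp [thetaApply, List.ofFn_succ]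

theorem thetaApply_zero {L : Type*} {m : ℕ} (δ : Fin m → L → L) (x : L) :
    thetaApply δ 0 x = x := by
  induction m with
  | zero => simp [thetaApply]
  | succ m ih =>
    rw [thetaApply_succ]
    exact ih _

theorem thetaApply_add_single {L : Type*} {m : ℕ} (δ : Fin m → L → L)
    (hcomm : ∀ i j : Fin m, ∀ x : L, δ i (δ j x) = δ j (δ i x)) (e : Fin m → ℕ) (i : Fin m)
    (x : L) : thetaApply δ (e + Pi.single i 1) x = δ i (thetaApply δ e x) := by
  induction m with
  | zero => exact i.elim0
  | succ m ih =>
    rw [thetaApply_succ, thetaApply_succ]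
    cases i using Fin.cases with
    | zero =>
      have : (fun i : Fin m ↦ (e + Pi.single 0 1 : Fin (m + 1) → ℕ) i.succ) = fun i ↦ e i.succ := by
        funext i; simp
      rw [this, ← Function.iterate_succ_apply' (δ 0)]
      simp
    | succ i =>
      have hi : (fun k : Fin m ↦ (e + Pi.single i.succ 1 : Fin (m + 1) → ℕ) k.succ) =
          (fun k ↦ e k.succ) + Pi.single i 1 := by
        funext k
        simp [Pi.single_apply]
      have h0 : (e + Pi.single i.succ 1 : Fin (m + 1) → ℕ) 0 = e 0 := by simp
      rw [hi, h0, ih _ fun i j y ↦ hcomm i.succ j.succ y]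
      exact ((Function.Commute.iterate_right (f := δ i.succ) (g := δ 0)
        (fun y ↦ hcomm i.succ 0 y) (e 0)) _).symm

/-- The derivatives of order at most `s` of the coordinates of `η`. -/
def derivSet {L : Type*} {m n : ℕ} (δ : Fin m → L → L) (η : Fin n → L) (s : ℕ) : Set L :=
  {x : L | ∃ e : Fin m → ℕ, (∑ i, e i) ≤ s ∧ ∃ j : Fin n, x = thetaApply δ e (η j)}

theorem finite_setOf_sum_le (m n s : ℕ) :
    {x : (Fin m → ℕ) × Fin n | ∑ i, x.1 i ≤ s}.Finite := by
  refine ((Set.finite_Iic (fun _ : Fin m ↦ s)).prod (Set.finite_univ (α := Fin n))).subset ?_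
  rintro ⟨e, j⟩ he
  exact ⟨fun i ↦ (Finset.single_le_sum (fun _ _ ↦ Nat.zero_le _) (Finset.mem_univ i)).trans he,
    trivial⟩

section derivSet

variable {L : Type*} {m n : ℕ} {δ : Fin m → L → L} {η : Fin n → L}

theorem derivSet_eq_image (s : ℕ) : derivSet δ η s =
    (fun x : (Fin m → ℕ) × Fin n ↦ thetaApply δ x.1 (η x.2)) '' {x | ∑ i, x.1 i ≤ s} := by
  ext x
  constructor
  · rintro ⟨e, he, j, rfl⟩
    exact ⟨(e, j), he, rfl⟩
  · rintro ⟨⟨e, j⟩, he, rfl⟩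
    exact ⟨e, he, j, rfl⟩

theorem derivSet_finite (s : ℕ) : (derivSet δ η s).Finite := by
  rw [derivSet_eq_image]
  exact (finite_setOf_sum_le m n s).image _

theorem derivSet_mono : Monotone (derivSet δ η) :=
  fun _ _ h _ ⟨e, he, j, hx⟩ ↦ ⟨e, he.trans h, j, hx⟩

theorem sum_add_single (e : Fin m → ℕ) (i : Fin m) :
    ∑ k, (e + Pi.single i 1 : Fin m → ℕ) k = ∑ k, e k + 1 := by
  simp [Finset.sum_add_distrib]

theorem apply_mem_derivSet (hcomm : ∀ i j : Fin m, ∀ x : L, δ i (δ j x) = δ j (δ i x)) {s : ℕ}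
    (i : Fin m) {x : L} (hx : x ∈ derivSet δ η s) : δ i x ∈ derivSet δ η (s + 1) := by
  obtain ⟨e, he, j, rfl⟩ := hx
  exact ⟨e + Pi.single i 1, by rw [sum_add_single]; omega, j,
    (thetaApply_add_single δ hcomm e i _).symm⟩

end derivSet

/-- An orderly ranking of the derivatives `θ η_j`: first by order, then lexicographically. -/
def ranking {m n : ℕ} (x : (Fin m → ℕ) × Fin n) : ℕ ×ₗ (Lex (Fin m → ℕ)) ×ₗ Fin n :=
  toLex (∑ i, x.1 i, toLex (toLex x.1, x.2))

section ranking

variable {m n : ℕ}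

theorem ranking_lt_iff {x y : (Fin m → ℕ) × Fin n} : ranking x < ranking y ↔
    ∑ i, x.1 i < ∑ i, y.1 i ∨ ∑ i, x.1 i = ∑ i, y.1 i ∧
      (toLex x.1 < toLex y.1 ∨ toLex x.1 = toLex y.1 ∧ x.2 < y.2) := by
  rw [ranking, ranking, Prod.Lex.toLex_lt_toLex, Prod.Lex.toLex_lt_toLex]

theorem ranking_injective : Function.Injective (ranking (m := m) (n := n)) := by
  intro x y h
  have h' := congrArg (fun z ↦ ofLex (ofLex z).2) h
  exact Prod.ext (toLex.injective (congrArg Prod.fst h')) (congrArg Prod.snd h')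

theorem sum_le_of_ranking_lt {x y : (Fin m → ℕ) × Fin n} (h : ranking x < ranking y) :
    ∑ i, x.1 i ≤ ∑ i, y.1 i := by
  rcases ranking_lt_iff.mp h with h | h
  exacts [h.le, h.1.le]

theorem ranking_add_lt {x y : (Fin m → ℕ) × Fin n} (h : ranking x < ranking y) (c : Fin m → ℕ) :
    ranking (x.1 + c, x.2) < ranking (y.1 + c, y.2) := by
  rw [ranking_lt_iff] at h ⊢
  simp only [Pi.add_apply, Finset.sum_add_distrib, add_lt_add_iff_right, add_left_inj, toLex_add]
  exact h

theorem ranking_lt_add_single (x : (Fin m → ℕ) × Fin n) (i : Fin m) :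
    ranking x < ranking (x.1 + Pi.single i 1, x.2) := by
  rw [ranking_lt_iff]
  left
  rw [sum_add_single]
  exact Nat.lt_succ_self _

/-- The derivatives of rank smaller than `x`. -/
def lowerSet {L : Type*} (δ : Fin m → L → L) (η : Fin n → L) (x : (Fin m → ℕ) × Fin n) : Set L :=
  (fun y : (Fin m → ℕ) × Fin n ↦ thetaApply δ y.1 (η y.2)) '' {y | ranking y < ranking x}

/-- The parametric derivatives of order at most `s` of `b`, relative to all derivatives of `a`. -/
def parametric {L : Type*} {n₁ : ℕ} (M : Matroid L) (δ : Fin m → L → L) (a : Fin n₁ → L)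
    (b : Fin n → L) (s : ℕ) : Set ((Fin m → ℕ) × Fin n) :=
  {x | ∑ i, x.1 i ≤ s ∧
    thetaApply δ x.1 (b x.2) ∉ M.closure ((⋃ h, derivSet δ a h) ∪ lowerSet δ b x)}

end ranking

section matroid

variable {L : Type*} {m n₁ n₂ : ℕ} {M : Matroid L} {δ : Fin m → L → L}

theorem le_induction_single {P : (Fin m → ℕ) → Prop}
    (hP : ∀ e i, P e → P (e + Pi.single i 1)) {e e' : Fin m → ℕ} (hle : e ≤ e') (he : P e) :
    P e' := by
  obtain ⟨c, rfl⟩ := le_iff_exists_add.mp hle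
  clear hle
  induction hk : ∑ i, c i generalizing c with
  | zero =>
    have : c = 0 := by
      funext i
      simpa using (Finset.sum_eq_zero_iff.mp hk) i (Finset.mem_univ i)
    rwa [this, add_zero]
  | succ k ih =>
    obtain ⟨i, -, hi⟩ := Finset.exists_ne_zero_of_sum_ne_zero (hk.trans_ne k.succ_ne_zero)
    have hc : c = (c - Pi.single i 1) + Pi.single i 1 := by
      funext l
      by_cases h : l = i
      · subst h; simp; omega
      · simp [h]
    rw [hc, ← add_assoc]
    refine hP _ _ (ih _ ?_)
    rw [hc, sum_add_single] at hk
    omega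

/-- If `θ b_j` depends on lower derivatives of `b` over the derivatives of `a`, then it depends on
them over the derivatives of `a` of order at most `h + ord θ`, for a uniform `h`. -/
theorem exists_uniform_shift [M.Finitary] (hE : M.E = Set.univ)
    (hcomm : ∀ i j : Fin m, ∀ x : L, δ i (δ j x) = δ j (δ i x))
    (hδ : ∀ i S T x, S ⊆ M.closure T → (∀ y ∈ S, δ i y ∈ M.closure T) → x ∈ M.closure S →
      δ i x ∈ M.closure T) (a : Fin n₁ → L) (b : Fin n₂ → L) :
    ∃ h, ∀ x : (Fin m → ℕ) × Fin n₂,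
      thetaApply δ x.1 (b x.2) ∈ M.closure ((⋃ h, derivSet δ a h) ∪ lowerSet δ b x) →
      thetaApply δ x.1 (b x.2) ∈
        M.closure (derivSet δ a (h + ∑ i, x.1 i) ∪ lowerSet δ b x) := by
  have hsub : ∀ S, S ⊆ M.closure S := fun S ↦ M.subset_closure S (hE ▸ S.subset_univ)
  let P (j : Fin n₂) (h : ℕ) (e : Fin m → ℕ) : Prop :=
    thetaApply δ e (b j) ∈ M.closure (derivSet δ a (h + ∑ i, e i) ∪ lowerSet δ b (e, j))
  have hstep : ∀ j h e i, P j h e → P j h (e + Pi.single i 1) := by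
    intro j h e i he
    simp only [P]
    rw [thetaApply_add_single δ hcomm, sum_add_single, ← add_assoc]
    refine hδ i _ _ _ ?_ ?_ he
    · refine subset_trans (Set.union_subset_union (derivSet_mono (Nat.le_succ _)) ?_) (hsub _)
      exact Set.image_mono fun y hy ↦ lt_trans hy (ranking_lt_add_single (e, j) i)
    · rintro y (hy | ⟨y, hy, rfl⟩)
      · exact hsub _ (Or.inl (apply_mem_derivSet hcomm i hy))
      · exact hsub _ (Or.inr ⟨(y.1 + Pi.single i 1, y.2), ranking_add_lt hy _,
          thetaApply_add_single δ hcomm _ _ _⟩)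
  have hmono : ∀ j h h' e e', h ≤ h' → e ≤ e' → P j h e → P j h' e' := by
    intro j h h' e e' hh hee he
    refine le_induction_single (P := P j h') (hstep j h') hee ?_
    exact M.closure_subset_closure
      (Set.union_subset_union_left _ (derivSet_mono (Nat.add_le_add_right hh _))) he
  choose H hH using fun j ↦ exists_forall_of_wellQuasiOrdered (P j) (hmono j)
  refine ⟨Finset.univ.sup H, fun ⟨e, j⟩ hx ↦ ?_⟩
  refine hmono j (H j) _ e e (Finset.le_sup (Finset.mem_univ j)) le_rfl (hH j e ?_)
  obtain ⟨I, hI, hIfin, -, hmem⟩ := Matroid.exists_mem_finite_closure_of_mem_closure hx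
  have hdir : Directed (· ⊆ ·) fun k ↦ derivSet δ a k ∪ lowerSet δ b (e, j) :=
    Monotone.directed_le fun k l hkl ↦ Set.union_subset_union_left _ (derivSet_mono hkl)
  rw [Set.iUnion_union] at hI
  obtain ⟨k, hk⟩ := hdir.exists_mem_subset_of_finset_subset_biUnion (s := hIfin.toFinset)
    (by simpa using hI)
  refine ⟨k, M.closure_subset_closure (subset_trans ?_ (Set.union_subset_union_left _
    (derivSet_mono (Nat.le_add_right k _)))) hmem⟩
  simpa using hk

theorem derivSet_subset_closure_parametric (hE : M.E = Set.univ) {a : Fin n₁ → L}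
    {b : Fin n₂ → L} {h : ℕ} (hh : ∀ x : (Fin m → ℕ) × Fin n₂,
      thetaApply δ x.1 (b x.2) ∈ M.closure ((⋃ h, derivSet δ a h) ∪ lowerSet δ b x) →
      thetaApply δ x.1 (b x.2) ∈
        M.closure (derivSet δ a (h + ∑ i, x.1 i) ∪ lowerSet δ b x)) (s : ℕ) :
    derivSet δ b s ⊆ M.closure (derivSet δ a (h + s) ∪
      (fun x : (Fin m → ℕ) × Fin n₂ ↦ thetaApply δ x.1 (b x.2)) '' parametric M δ a b s) := by
  have hsub : ∀ S, S ⊆ M.closure S := fun S ↦ M.subset_closure S (hE ▸ S.subset_univ)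
  rw [derivSet_eq_image]
  rintro _ ⟨x, hx, rfl⟩
  induction x using (InvImage.wf ranking wellFounded_lt).induction with
  | _ x ih =>
    by_cases hpar : thetaApply δ x.1 (b x.2) ∈
        M.closure ((⋃ h, derivSet δ a h) ∪ lowerSet δ b x)
    · refine M.closure_subset_closure_of_subset_closure (Set.union_subset ?_ ?_) (hh x hpar)
      · exact (derivSet_mono (Nat.add_le_add_left hx h)).trans
          (Set.subset_union_left.trans (hsub _))
      · rintro _ ⟨y, hy, rfl⟩
        exact ih y hy ((sum_le_of_ranking_lt hy).trans hx)
    · exact hsub _ (Or.inr ⟨x, ⟨hx, hpar⟩, rfl⟩)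

theorem parametric_finite {a : Fin n₁ → L} {b : Fin n₂ → L} (s : ℕ) :
    (parametric M δ a b s).Finite :=
  (finite_setOf_sum_le m n₂ s).subset fun _ hx ↦ hx.1

theorem parametric_indep {M' : Matroid L} (hE' : M'.E = Set.univ) {a : Fin n₁ → L}
    {b : Fin n₂ → L}
    (hM : ∀ Y, M'.closure Y ⊆ M.closure ((⋃ h, derivSet δ a h) ∪ Y)) (s : ℕ) :
    M'.Indep ((fun x : (Fin m → ℕ) × Fin n₂ ↦ thetaApply δ x.1 (b x.2)) ''
      parametric M δ a b s) := by
  classical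
  suffices ∀ t : Finset ((Fin m → ℕ) × Fin n₂), (t : Set _) ⊆ parametric M δ a b s →
      M'.Indep ((fun x : (Fin m → ℕ) × Fin n₂ ↦ thetaApply δ x.1 (b x.2)) '' t) by
    simpa using this (parametric_finite s).toFinset (by simp)
  intro t
  induction t using Finset.induction_on_max_value ranking with
  | empty => simp
  | insert x t hxt hmax ih =>
    intro ht
    rw [Finset.coe_insert, Set.insert_subset_iff] at ht
    rw [Finset.coe_insert, Set.image_insert_eq]
    refine ((ih ht.2).notMem_closure_iff (hE' ▸ Set.mem_univ _)).mp (fun hmem ↦ ?_) |>.1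
    refine ht.1.2 (hM _ (M'.closure_subset_closure (Set.image_mono fun y hy ↦ ?_) hmem))
    exact lt_of_le_of_ne (hmax y hy)
      fun h ↦ hxt (ranking_injective h ▸ hy)

end matroid

section append

variable {L : Type*} {m n₁ n₂ : ℕ} {δ : Fin m → L → L}

theorem derivSet_append (a : Fin n₁ → L) (b : Fin n₂ → L) (s : ℕ) :
    derivSet δ (Fin.append a b) s = derivSet δ a s ∪ derivSet δ b s := by
  ext x
  simp only [derivSet, Set.mem_ofPred_eq, Set.mem_union]
  constructor
  · rintro ⟨e, he, j, rfl⟩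
    cases j using Fin.addCases with
    | left j => exact Or.inl ⟨e, he, j, by rw [Fin.append_left]⟩
    | right j => exact Or.inr ⟨e, he, j, by rw [Fin.append_right]⟩
  · rintro (⟨e, he, j, rfl⟩ | ⟨e, he, j, rfl⟩)
    · exact ⟨e, he, Fin.castAdd n₂ j, by rw [Fin.append_left]⟩
    · exact ⟨e, he, Fin.natAdd n₁ j, by rw [Fin.append_right]⟩

end append

section kolchin

open AlgebraicIndependent

variable {L : Type*} [Field L] {m n n₁ n₂ : ℕ} {δ : Fin m → L → L} {K : Subfield L}

theorem cast_diffTrdeg (η : Fin n → L) (s : ℕ) :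
    (diffTrdeg δ K η s : ℕ∞) = (matroid K L).eRk (derivSet δ η s) :=
  trdegNat_adjoin_eq_eRk K (derivSet_finite s)

theorem le_diffAdjoin (S : Set L) : K ≤ diffAdjoin δ K S :=
  le_sInf fun _ hF ↦ hF.2.1

theorem diffAdjoin_subset_closure
    (hδ : ∀ i S T x, S ⊆ (matroid K L).closure T → (∀ y ∈ S, δ i y ∈ (matroid K L).closure T) →
      x ∈ (matroid K L).closure S → δ i x ∈ (matroid K L).closure T)
    (hcomm : ∀ i j : Fin m, ∀ x : L, δ i (δ j x) = δ j (δ i x)) (a : Fin n → L) :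
    (diffAdjoin δ K (Set.range a) : Set L) ⊆
      (matroid K L).closure (⋃ h, derivSet δ a h) := by
  have hA := (matroid K L).subset_closure (⋃ h, derivSet δ a h) (Set.subset_univ _)
  obtain ⟨N, hN, hNalg⟩ :=
    matroid_isFlat_iff.mp ((matroid K L).isFlat_closure (⋃ h, derivSet δ a h))
  have hmem : ∀ x, x ∈ N ↔ x ∈ (matroid K L).closure (⋃ h, derivSet δ a h) := fun x ↦ by
    rw [← hN, SetLike.mem_coe]
  let F : Subfield L :=
    { N with
      neg_mem' := fun hx ↦ N.neg_mem hx
      inv_mem' := fun x hx ↦ (hmem _).mpr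
        (hNalg _ (isAlgebraic_algebraMap (⟨x, hx⟩ : N)).inv) }
  have hF : diffAdjoin δ K (Set.range a) ≤ F := by
    refine sInf_le ⟨fun i x hx ↦ (hmem _).mpr (hδ i _ _ x hA (fun y hy ↦ ?_) ((hmem x).mp hx)),
      fun x hx ↦ N.algebraMap_mem ⟨x, hx⟩, ?_⟩
    · obtain ⟨k, hk⟩ := Set.mem_iUnion.mp hy
      exact hA (Set.mem_iUnion.mpr ⟨k + 1, apply_mem_derivSet hcomm i hk⟩)
    · rintro _ ⟨j, rfl⟩
      exact (hmem _).mpr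
        (hA (Set.mem_iUnion.mpr ⟨0, 0, by simp, j, (thetaApply_zero δ _).symm⟩))
  exact fun x hx ↦ (hmem x).mp (hF hx)

theorem diffTrdeg_le_append (a : Fin n₁ → L) (b : Fin n₂ → L) (s : ℕ) :
    diffTrdeg δ K a s ≤ diffTrdeg δ K (Fin.append a b) s := by
  rw [← Nat.cast_le (α := ℕ∞), cast_diffTrdeg, cast_diffTrdeg, derivSet_append]
  exact (matroid K L).eRk_mono Set.subset_union_left

theorem diffTrdeg_le_append_of_le {F : Subfield L} (hKF : K ≤ F) (a : Fin n₁ → L)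
    (b : Fin n₂ → L) (s : ℕ) :
    diffTrdeg δ F b s ≤ diffTrdeg δ K (Fin.append a b) s := by
  rw [← Nat.cast_le (α := ℕ∞), cast_diffTrdeg, cast_diffTrdeg, derivSet_append]
  obtain ⟨B, hB⟩ := (matroid F L).exists_isBasis (derivSet δ b s) (Set.subset_univ _)
  let _ : Algebra K F := (Subfield.inclusion hKF).toAlgebra
  have : IsScalarTower K F L := IsScalarTower.of_algebraMap_eq fun _ ↦ rfl
  rw [hB.eRk_eq_encard]
  refine Matroid.Indep.encard_le_eRk_of_subset ?_ (hB.subset.trans Set.subset_union_right)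
  exact AlgebraicIndependent.restrictScalars (algebraMap K F).injective hB.indep

/-- The transcendence degree of `(a, b)` over `K` is bounded by the sum of those of `a` over `K` and
of `b` over `K⟨a⟩`, up to a shift. -/
theorem exists_diffTrdeg_append_le
    (hδ : ∀ i S T x, S ⊆ (matroid K L).closure T → (∀ y ∈ S, δ i y ∈ (matroid K L).closure T) →
      x ∈ (matroid K L).closure S → δ i x ∈ (matroid K L).closure T)
    (hcomm : ∀ i j : Fin m, ∀ x : L, δ i (δ j x) = δ j (δ i x)) (a : Fin n₁ → L)
    (b : Fin n₂ → L) : ∃ h, ∀ s, diffTrdeg δ K (Fin.append a b) s ≤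
      diffTrdeg δ K a (h + s) + diffTrdeg δ (diffAdjoin δ K (Set.range a)) b s := by
  obtain ⟨h, hh⟩ := exists_uniform_shift (M := matroid K L) rfl hcomm hδ a b
  refine ⟨h, fun s ↦ ?_⟩
  rw [← Nat.cast_le (α := ℕ∞), Nat.cast_add, cast_diffTrdeg, cast_diffTrdeg, cast_diffTrdeg,
    derivSet_append]
  set P := (fun x : (Fin m → ℕ) × Fin n₂ ↦ thetaApply δ x.1 (b x.2)) ''
    parametric (matroid K L) δ a b s
  have hP : P ⊆ derivSet δ b s := by
    rw [derivSet_eq_image]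
    exact Set.image_mono fun x hx ↦ hx.1
  have hsub : derivSet δ a s ∪ derivSet δ b s ⊆
      (matroid K L).closure (derivSet δ a (h + s) ∪ P) :=
    Set.union_subset
      ((derivSet_mono (Nat.le_add_left s h)).trans
        (Set.subset_union_left.trans ((matroid K L).subset_closure _ (Set.subset_univ _))))
      (derivSet_subset_closure_parametric rfl hh s)
  calc _ ≤ (matroid K L).eRk (derivSet δ a (h + s) ∪ P) := by
        rw [← (matroid K L).eRk_closure_eq (derivSet δ a (h + s) ∪ P)]
        exact (matroid K L).eRk_mono hsub
    _ ≤ (matroid K L).eRk (derivSet δ a (h + s)) + P.encard :=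
        ((matroid K L).eRk_union_le_eRk_add_eRk _ _).trans
          (add_le_add_right ((matroid K L).eRk_le_encard P) _)
    _ ≤ _ := by
        refine add_le_add_right (Matroid.Indep.encard_le_eRk_of_subset ?_ hP) _
        exact parametric_indep rfl (fun Y ↦ matroid_closure_subset_closure_union
          (diffAdjoin_subset_closure hδ hcomm a) Y) s

end kolchin

/-- `τ((a,b)/K) = max {τ(a/K), τ(b/K⟨a⟩)}`: the degree of a Kolchin polynomial of the
concatenated tuple `(a, b)` over `K` is the maximum of the degree of a Kolchin polynomial of `a`
over `K` and the degree of a Kolchin polynomial of `b` over `K⟨a⟩`. -/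
theorem differential_type_of_pair
    {L : Type*} [Field L] [CharZero L] {m : ℕ} (hm : 1 ≤ m)
    (δ : Fin m → L → L)
    (hadd : ∀ i : Fin m, ∀ x y : L, δ i (x + y) = δ i x + δ i y)
    (hleib : ∀ i : Fin m, ∀ x y : L, δ i (x * y) = x * δ i y + δ i x * y)
    (hcomm : ∀ i j : Fin m, ∀ x : L, δ i (δ j x) = δ j (δ i x))
    (K : Subfield L) (hK : IsDiffSubfield δ K)
    {n₁ n₂ : ℕ} (a : Fin n₁ → L) (b : Fin n₂ → L)
    (p q r : ℚ[X])
    (hp : IsKolchinPoly δ K (Fin.append a b) p)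
    (hq : IsKolchinPoly δ K a q)
    (hr : IsKolchinPoly δ (diffAdjoin δ K (Set.range a)) b r) :
    p.degree = max q.degree r.degree := by
  obtain ⟨D, rfl⟩ : ∃ D : Fin m → Derivation ℤ L L, δ = fun i ↦ ⇑(D i) :=
    ⟨fun i ↦ Derivation.mk' (AddMonoidHom.mk' (δ i) (hadd i)).toIntLinearMap
      fun x y ↦ by simpa [mul_comm y] using hleib i x y, rfl⟩
  obtain ⟨h, hh⟩ := exists_diffTrdeg_append_le
    (fun i S T x hS hDS hx ↦ deriv_mem_closure (D i) (hK i) hS hDS hx) hcomm a b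
  obtain ⟨sp, hp⟩ := hp
  obtain ⟨sq, hq⟩ := hq
  obtain ⟨sr, hr⟩ := hr
  refine le_antisymm ?_ (max_le ?_ ?_)
  · calc p.degree ≤ (taylor (h : ℚ) q + r).degree := by
          refine degree_le_of_eventually_eval_le ?_
          filter_upwards [Filter.eventually_ge_atTop (max sp (max sq sr))] with s hs
          simp only [max_le_iff] at hs
          have hqs := hq (h + s) (by omega)
          rw [Nat.cast_add, add_comm] at hqs
          rw [eval_add, taylor_eval, hqs, hp s hs.1, hr s hs.2.2]
          exact ⟨Nat.cast_nonneg _, by exact_mod_cast hh s⟩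
      _ ≤ max q.degree r.degree := by
          simpa using degree_add_le (taylor (h : ℚ) q) r
  · refine degree_le_of_eventually_eval_le ?_
    filter_upwards [Filter.eventually_ge_atTop (max sp sq)] with s hs
    simp only [max_le_iff] at hs
    rw [hp s hs.1, hq s hs.2]
    exact ⟨Nat.cast_nonneg _, by exact_mod_cast diffTrdeg_le_append a b s⟩
  · refine degree_le_of_eventually_eval_le ?_
    filter_upwards [Filter.eventually_ge_atTop (max sp sr)] with s hs
    simp only [max_le_iff] at hs
    rw [hp s hs.1, hr s hs.2]
    exact ⟨Nat.cast_nonneg _, by exact_mod_cast diffTrdeg_le_append_of_le (le_diffAdjoin _) a b s⟩
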